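/- Let f(x) = a·x² + b·x + c with a ≥ 1 and b, c ≥ 0. In the root q-Jaco graph J_∞(f), the out-degrees of consecutive vertices are never equal: d⁺(v_i) ≠ d⁺(v_{i+1}) for every i ∈ ℕ, where d⁺(v_i) = f(i) − d⁻(v_i). -/

import Mathlib

/-- In-degree of vertex `v_j` in the (root) Jaco graph with incidence function `f`:
`d⁻(v_j) = |{ i : 1 ≤ i < j, i + f i − d⁻(v_i) ≥ j }|`. -/
noncomputable def jacoIn (f : ℕ → ℕ) (j : ℕ) : ℕ :=
  Nat.strongRecOn j (fun j ih =>
    (((Finset.Ico 1 j).attach).filter (fun i : {x // x ∈ Finset.Ico 1 j} =>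
      j ≤ i.1 + f i.1 - ih i.1 (Finset.mem_Ico.mp i.2).2)).card)

/-- The arc `(v_i, v_j)` is present in the Jaco graph iff `1 ≤ i < j` and
`i + f i − d⁻(v_i) ≥ j`. -/
def jacoArc (f : ℕ → ℕ) (i j : ℕ) : Prop :=
  1 ≤ i ∧ i < j ∧ j ≤ i + f i - jacoIn f i

noncomputable instance (f : ℕ → ℕ) (i j : ℕ) : Decidable (jacoArc f i j) := by
  unfold jacoArc; infer_instance

/-- The underlying undirected simple graph `J*_n(f)` of the finite Jaco graph `J_n(f)`,
on vertex set `{v_1, …, v_n}` (vertex `x : Fin n` represents `v_{x+1}`). -/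
def jacoGraph (f : ℕ → ℕ) (n : ℕ) : SimpleGraph (Fin n) :=
  SimpleGraph.fromRel (fun x y => jacoArc f (x.1 + 1) (y.1 + 1))

noncomputable instance (f : ℕ → ℕ) (n : ℕ) : DecidableRel (jacoGraph f n).Adj := fun x y =>
  decidable_of_iff
    (x ≠ y ∧ (jacoArc f (x.1 + 1) (y.1 + 1) ∨ jacoArc f (y.1 + 1) (x.1 + 1)))
    (by unfold jacoGraph; exact (SimpleGraph.fromRel_adj (fun a b : Fin n => jacoArc f (a.1 + 1) (b.1 + 1)) x y).symm)

/-!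
Passing from `v_j` to `v_{j+1}`, every in-neighbour of `v_{j+1}` other than `v_j` itself is already
an in-neighbour of `v_j`, so the in-degree rises by at most one. An incidence function that rises by
at least two therefore has strictly increasing out-degrees.
-/

theorem jacoIn_eq_card_filter_jacoArc (f : ℕ → ℕ) (j : ℕ) :
    jacoIn f j = ((Finset.Ico 1 j).filter fun i => jacoArc f i j).card := by
  have recursion : jacoIn f j =
      ((Finset.Ico 1 j).attach.filter fun i => j ≤ i.1 + f i.1 - jacoIn f i.1).card := by
    conv_lhs => rw [jacoIn, Nat.strongRecOn_eq]
    rfl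
  rw [recursion, Finset.filter_attach (fun i => j ≤ i + f i - jacoIn f i), Finset.card_map,
    Finset.card_attach]
  congr 1
  refine Finset.filter_congr fun i hi => ?_
  obtain ⟨one_le, lt⟩ := Finset.mem_Ico.mp hi
  simp only [jacoArc, one_le, lt, true_and]

theorem jacoArc.of_le_right {f : ℕ → ℕ} {i j k : ℕ} (h : jacoArc f i k) (hij : i < j)
    (hjk : j ≤ k) : jacoArc f i j :=
  ⟨h.1, hij, hjk.trans h.2.2⟩

theorem jacoIn_le_sub_one (f : ℕ → ℕ) (j : ℕ) : jacoIn f j ≤ j - 1 := by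
  rw [jacoIn_eq_card_filter_jacoArc, ← Nat.card_Ico]
  exact Finset.card_filter_le _ _

theorem jacoIn_succ_le (f : ℕ → ℕ) (j : ℕ) : jacoIn f (j + 1) ≤ jacoIn f j + 1 := by
  have inNeighbors_subset : (Finset.Ico 1 (j + 1)).filter (fun i => jacoArc f i (j + 1)) ⊆
      insert j ((Finset.Ico 1 j).filter fun i => jacoArc f i j) := by
    intro i hi
    obtain ⟨-, harc⟩ := Finset.mem_filter.mp hi
    rcases (Nat.lt_succ_iff.mp harc.2.1).eq_or_lt with rfl | hij
    · exact Finset.mem_insert_self _ _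
    · exact Finset.mem_insert_of_mem <| Finset.mem_filter.mpr
        ⟨Finset.mem_Ico.mpr ⟨harc.1, hij⟩, harc.of_le_right hij j.le_succ⟩
  rw [jacoIn_eq_card_filter_jacoArc f (j + 1), jacoIn_eq_card_filter_jacoArc f j]
  exact (Finset.card_le_card inNeighbors_subset).trans (Finset.card_insert_le _ _)

theorem qJaco_outdegrees_distinct_general {f : ℕ → ℕ} {i : ℕ} (hin : jacoIn f i ≤ f i)
    (hstep : f i + 2 ≤ f (i + 1)) : f i - jacoIn f i < f (i + 1) - jacoIn f (i + 1) := by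
  have := jacoIn_succ_le f i
  omega

theorem le_quadratic {a : ℕ} (ha : 1 ≤ a) (b c i : ℕ) : i ≤ a * i ^ 2 + b * i + c :=
  calc
    i ≤ i ^ 2 := Nat.le_self_pow two_ne_zero i
    _ ≤ a * i ^ 2 := Nat.le_mul_of_pos_left _ ha
    _ ≤ a * i ^ 2 + b * i + c := by omega

theorem quadratic_add_two_le {a i : ℕ} (ha : 1 ≤ a) (hi : 1 ≤ i) (b c : ℕ) :
    a * i ^ 2 + b * i + c + 2 ≤ a * (i + 1) ^ 2 + b * (i + 1) + c := by
  have two_le : 2 ≤ a * (2 * i + 1) + b := by nlinarith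
  calc
    a * i ^ 2 + b * i + c + 2 ≤ a * i ^ 2 + b * i + c + (a * (2 * i + 1) + b) := by gcongr
    _ = a * (i + 1) ^ 2 + b * (i + 1) + c := by ring

/-- For `f(x) = a·x² + b·x + c` (`a ≥ 1`, `b, c ≥ 0`), in the root
q-Jaco graph `J_∞(f)` the out-degrees `d⁺(v_i) = f(i) − d⁻(v_i)` of consecutive
vertices are never equal. -/
theorem qJaco_outdegrees_distinct (a b c : ℕ) (ha : 1 ≤ a) (i : ℕ) (hi : 1 ≤ i) :
    (a * i ^ 2 + b * i + c) - jacoIn (fun x => a * x ^ 2 + b * x + c) i ≠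
      (a * (i + 1) ^ 2 + b * (i + 1) + c) -
        jacoIn (fun x => a * x ^ 2 + b * x + c) (i + 1) := by
  have hin := (jacoIn_le_sub_one (fun x => a * x ^ 2 + b * x + c) i).trans
    (i.pred_le.trans (le_quadratic ha b c i))
  exact (qJaco_outdegrees_distinct_general hin (quadratic_add_two_le ha hi b c)).ne
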